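/- arXiv:2605.28012 — 2 statements merged into one kernel-verified Lean document; each statement's English description precedes it below -/
import Mathlib

section
/- Let r, s > 1 and let m_1, ..., m_r be nonnegative integers and n_1, ..., n_s be positive integers, with the cyclic conventions m_{r+1} = m_1 and n_{s+1} = n_1. Then for all integers a, b with 0 ≤ a ≤ s and 1 ≤ b ≤ r, the alternating sum F_{r,s}^{(b)}(m; n; a; q) is a polynomial in q with nonnegative integer coefficients. -/
open Finset

noncomputable section

/-- The `q`-integer `[n] = (1 - x^n)/(1 - x)` at the value `x`. -/
def qint (x : RatFunc ℚ) (n : ℕ) : RatFunc ℚ := (1 - x ^ n) / (1 - x)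

/-- The `q`-factorial `[n]! = [1][2]⋯[n]`, with `[0]! = 1`. -/
def qfact (x : RatFunc ℚ) (n : ℕ) : RatFunc ℚ := ∏ i ∈ Finset.range n, qint x (i + 1)

/-- The Gaussian (q-binomial) coefficient `[N choose K]`, equal to
`[N]!/([K]![N-K]!)` if `0 ≤ K ≤ N`, and `0` otherwise. -/
def qbinom (x : RatFunc ℚ) (N K : ℤ) : RatFunc ℚ :=
  if 0 ≤ K ∧ K ≤ N then qfact x N.toNat / (qfact x K.toNat * qfact x (N - K).toNat) else 0

/-- The alternating sum `F_{r,s}^{(b)}(m; n; a; x)`.  The cyclic vectors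
`(m_1, …, m_r)` and `(n_1, …, n_s)` are given as functions `m n : ℕ → ℕ` on
`0, …, r-1` and `0, …, s-1` respectively, with cyclic successor `(i+1) % r`
(so `m_{r+1} = m_1` and `n_{s+1} = n_1`). -/
def F (r s a b : ℕ) (m n : ℕ → ℕ) (x : RatFunc ℚ) : RatFunc ℚ :=
  (qfact x (m 0) * qfact x (n 0) * qfact x (m (r - 1) + n (s - 1) + 1)) /
      (qfact x (m 0 + m (r - 1) + 1) * qfact x (n 0 + n (s - 1))) *
    ∑ k ∈ Finset.Icc (-(n 0 : ℤ)) ((n 0 : ℤ)),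
      (-1 : RatFunc ℚ) ^ k *
        x ^ ((a : ℤ) * k ^ 2 + (2 * (b : ℤ) - 1) * (k * (k - 1) / 2)) *
        (∏ i ∈ Finset.range r,
          qbinom x ((m i : ℤ) + (m ((i + 1) % r) : ℤ) + 1) ((m i : ℤ) + k)) *
        (∏ j ∈ Finset.range s,
          qbinom x ((n j : ℤ) + (n ((j + 1) % s) : ℤ)) ((n j : ℤ) + k))

/-- A rational function lies in `ℕ[q]` if it equals a polynomial in `q`
with nonnegative integer coefficients. -/
def IsNonnegPoly (f : RatFunc ℚ) : Prop :=
  ∃ p : Polynomial ℕ, f = algebraMap (Polynomial ℚ) (RatFunc ℚ) (p.map (Nat.castRingHom ℚ))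

/-!
Write `c = 1` for the entries `m_i` and `c = 0` for the entries `n_j`. Up to a factor independent
of `k`, each cyclic product of Gaussian coefficients is the product of the weights
`1/([p+k]! [p+c-k]!)` over the entries `p`. The two forms of the `q`-Chu–Vandermonde identity
expand the product of two adjacent weights, respectively `q^(k(k-c))` times that product, as a
combination of weights of single entries `t ≤ p`. So two adjacent entries can be merged into one,
either keeping the parameter (`b` or `a`) or lowering it by one, and the factorials in front of the
sum turn the coefficients of the combination into powers of `q` times Gaussian coefficients.

Merging the `m_i` leaves a single entry `m` and `b = 1`. The remaining factors are then even in `k`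
except for the weight of `m` and the sign `(-1)^k q^(k(k-1)/2)`, whose product with `1 - q^k` is
odd. Hence the weight of `m` may be replaced by `[m+1]` times the `c = 0` weight of `m + 1`, which
becomes one more entry at the end of the `n_j`. Merging these leaves a single entry `t` and
`a = 0`, for which the `q`-binomial theorem evaluates the sum to `1` if `t = 0` and to `0`
otherwise.
-/

open RatFunc (X)

/-! ### Nonnegative polynomials -/

namespace IsNonnegPoly

lemma zero : IsNonnegPoly 0 := ⟨0, by simp⟩

lemma one : IsNonnegPoly 1 := ⟨1, by simp⟩

lemma X_zpow {z : ℤ} (hz : 0 ≤ z) : IsNonnegPoly (X ^ z) := by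
  lift z to ℕ using hz
  exact ⟨Polynomial.X ^ z, by simp⟩

lemma add {f g : RatFunc ℚ} : IsNonnegPoly f → IsNonnegPoly g → IsNonnegPoly (f + g) := by
  rintro ⟨p, rfl⟩ ⟨p', rfl⟩
  exact ⟨p + p', by simp⟩

lemma mul {f g : RatFunc ℚ} : IsNonnegPoly f → IsNonnegPoly g → IsNonnegPoly (f * g) := by
  rintro ⟨p, rfl⟩ ⟨p', rfl⟩
  exact ⟨p * p', by simp⟩

lemma sum {ι : Type*} {s : Finset ι} {f : ι → RatFunc ℚ} (h : ∀ i ∈ s, IsNonnegPoly (f i)) :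
    IsNonnegPoly (∑ i ∈ s, f i) :=
  sum_induction f IsNonnegPoly (fun _ _ => add) zero h

end IsNonnegPoly

/-! ### Factorials and their reciprocals -/

lemma X_zpow_add (i j : ℤ) : (X : RatFunc ℚ) ^ (i + j) = X ^ i * X ^ j :=
  zpow_add₀ RatFunc.X_ne_zero i j

lemma one_sub_X_pow_ne_zero {n : ℕ} (hn : n ≠ 0) : (1 - X ^ n : RatFunc ℚ) ≠ 0 := by
  intro h
  have hX : (Polynomial.X : Polynomial ℚ) ^ n = 1 :=
    RatFunc.algebraMap_injective ℚ (by simpa using (sub_eq_zero.mp h).symm)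
  simpa [hn] using congrArg Polynomial.natDegree hX

lemma one_sub_X_ne_zero : (1 - X : RatFunc ℚ) ≠ 0 := by
  simpa using one_sub_X_pow_ne_zero one_ne_zero

lemma qfact_zero (x : RatFunc ℚ) : qfact x 0 = 1 := prod_range_zero _

lemma qfact_X_ne_zero (n : ℕ) : qfact X n ≠ 0 :=
  prod_ne_zero_iff.mpr fun i _ =>
    div_ne_zero (one_sub_X_pow_ne_zero i.succ_ne_zero) one_sub_X_ne_zero

lemma one_sub_X_mul_qfact_succ (n : ℕ) :
    (1 - X) * qfact X (n + 1) = (1 - X ^ (n + 1)) * qfact X n := by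
  rw [qfact, prod_range_succ, ← qfact, qint, mul_left_comm, mul_div_cancel₀ _ one_sub_X_ne_zero,
    mul_comm]

/-- The reciprocal `1/[z]!` of the `q`-factorial, extended by `0` to negative integers `z`, so that
`[N choose K] = [N]!/([K]![N-K]!)` holds for every integer `K`. -/
def invQfact (z : ℤ) : RatFunc ℚ := if 0 ≤ z then (qfact X z.toNat)⁻¹ else 0

lemma invQfact_of_neg {z : ℤ} (hz : z < 0) : invQfact z = 0 := if_neg (not_le.mpr hz)

lemma invQfact_natCast (n : ℕ) : invQfact n = (qfact X n)⁻¹ := by simp [invQfact]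

lemma invQfact_zero : invQfact 0 = 1 := by simp [invQfact, qfact_zero]

lemma qfact_mul_invQfact (n : ℕ) : qfact X n * invQfact n = 1 := by
  rw [invQfact_natCast, mul_inv_cancel₀ (qfact_X_ne_zero n)]

lemma one_sub_X_mul_invQfact (z : ℤ) :
    (1 - X) * invQfact z = (1 - X ^ (z + 1)) * invQfact (z + 1) := by
  rcases lt_trichotomy z (-1) with hz | rfl | hz
  · rw [invQfact_of_neg (by omega), invQfact_of_neg (by omega), mul_zero, mul_zero]
  · simp [invQfact_of_neg]
  · lift z to ℕ using by omega
    have hfact := one_sub_X_mul_qfact_succ z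
    rw [invQfact_natCast, ← Nat.cast_succ, invQfact_natCast, zpow_natCast, ← div_eq_mul_inv,
      ← div_eq_mul_inv, div_eq_div_iff (qfact_X_ne_zero z) (qfact_X_ne_zero _), hfact]

/-! ### Gaussian coefficients -/

lemma qbinom_natCast (N : ℕ) (K : ℤ) :
    qbinom X N K = qfact X N * (invQfact K * invQfact (N - K)) := by
  simp only [qbinom, invQfact]
  split_ifs <;> first | omega | simp [div_eq_mul_inv, mul_comm]

lemma qbinom_of_neg (x : RatFunc ℚ) (N : ℤ) {K : ℤ} (h : K < 0) : qbinom x N K = 0 :=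
  if_neg (by omega)

lemma qbinom_of_lt (x : RatFunc ℚ) {N K : ℤ} (h : N < K) : qbinom x N K = 0 :=
  if_neg (by omega)

lemma qbinom_zero_left (x : RatFunc ℚ) (K : ℤ) : qbinom x 0 K = if K = 0 then 1 else 0 := by
  rcases lt_trichotomy K 0 with hK | rfl | hK
  · rw [qbinom_of_neg _ _ hK, if_neg hK.ne]
  · simp [qbinom, qfact_zero]
  · rw [qbinom_of_lt _ hK, if_neg hK.ne']

lemma qbinom_symm (x : RatFunc ℚ) (N K : ℤ) : qbinom x N (N - K) = qbinom x N K := by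
  simp only [qbinom, sub_sub_cancel, mul_comm (qfact x (N - K).toNat)]
  exact if_congr (by omega) rfl rfl

lemma qbinom_succ (N : ℕ) (K : ℤ) :
    qbinom X (N + 1) K = qbinom X N K + X ^ ((N : ℤ) + 1 - K) * qbinom X N (K - 1) := by
  have hN := one_sub_X_mul_qfact_succ N
  have hK := one_sub_X_mul_invQfact (K - 1)
  have hNK := one_sub_X_mul_invQfact (N - K)
  have hX : (X : RatFunc ℚ) ^ (N + 1) = X ^ ((N : ℤ) + 1 - K) * X ^ K := by
    rw [← X_zpow_add, sub_add_cancel, ← Nat.cast_succ, zpow_natCast]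
  rw [← Nat.cast_succ, qbinom_natCast, qbinom_natCast, qbinom_natCast, Nat.cast_succ,
    show (N : ℤ) - (K - 1) = N + 1 - K by ring]
  rw [sub_add_cancel] at hK
  rw [show (N : ℤ) - K + 1 = N + 1 - K by ring] at hNK
  refine mul_left_cancel₀ one_sub_X_ne_zero ?_
  linear_combination invQfact K * invQfact (N + 1 - K) * hN
    - X ^ ((N : ℤ) + 1 - K) * qfact X N * invQfact (N + 1 - K) * hK
    - qfact X N * invQfact K * hNK - qfact X N * invQfact K * invQfact (N + 1 - K) * hX

lemma qbinom_succ' (N : ℕ) (K : ℤ) :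
    qbinom X (N + 1) K = X ^ K * qbinom X N K + qbinom X N (K - 1) := by
  rw [← qbinom_symm, qbinom_succ, ← qbinom_symm X N K, ← qbinom_symm X N (K - 1)]
  ring_nf

lemma isNonnegPoly_qbinom (N : ℕ) (K : ℤ) : IsNonnegPoly (qbinom X N K) := by
  induction N generalizing K with
  | zero =>
    rw [Nat.cast_zero, qbinom_zero_left]
    split_ifs
    exacts [.one, .zero]
  | succ N ih =>
    rcases lt_or_ge K 0 with hK | hK
    · exact qbinom_of_neg X _ hK ▸ .zero
    · rw [Nat.cast_succ, qbinom_succ']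
      exact ((IsNonnegPoly.X_zpow hK).mul (ih _)).add (ih _)

lemma qfact_mul_invQfact_sub (N j : ℕ) :
    qfact X N * invQfact (N - j) = qbinom X N j * qfact X j := by
  rw [qbinom_natCast]
  linear_combination (-qfact X N * invQfact (N - j)) * qfact_mul_invQfact j

lemma invQfact_mul_invQfact (y z : ℤ) :
    invQfact y * invQfact z = invQfact (y + z) * qbinom X (y + z) y := by
  rcases lt_or_ge (y + z) 0 with h | h
  · rw [invQfact_of_neg h, zero_mul]
    rcases lt_or_ge y 0 with hy | hy
    · rw [invQfact_of_neg hy, zero_mul]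
    · rw [invQfact_of_neg (show z < 0 by omega), mul_zero]
  · obtain ⟨N, hN⟩ := Int.eq_ofNat_of_zero_le h
    rw [hN, qbinom_natCast, show (N : ℤ) - y = z by omega]
    linear_combination (-invQfact y * invQfact z) * qfact_mul_invQfact N

theorem sum_qbinom_mul_pow (N : ℕ) (z : RatFunc ℚ) :
    ∑ j ∈ range (N + 1), X ^ j.choose 2 * z ^ j * qbinom X N j =
      ∏ i ∈ range N, (1 + z * X ^ i) := by
  induction N with
  | zero => simp [qbinom_zero_left]
  | succ N ih =>
    simp only [Nat.cast_succ, qbinom_succ, mul_add, sum_add_distrib]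
    rw [prod_range_succ, mul_add, mul_one, ← ih, sum_range_succ _ (N + 1),
      qbinom_of_lt X (K := (N + 1 : ℕ)) (by simp), sum_range_succ' _ (N + 1),
      qbinom_of_neg X N (K := ((0 : ℕ) : ℤ) - 1) (by simp), sum_mul]
    simp only [mul_zero, add_zero]
    congr 1
    refine sum_congr rfl fun j _ => ?_
    have hX : (X : RatFunc ℚ) ^ j * X ^ ((N : ℤ) + 1 - (j + 1 : ℕ)) = X ^ N := by
      rw [← zpow_natCast, ← X_zpow_add, ← zpow_natCast]
      push_cast
      ring_nf
    rw [Nat.choose_succ_succ' j 1, Nat.choose_one_right, pow_add, Nat.cast_succ,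
      add_sub_cancel_right, ← hX]
    push_cast
    ring

/-! ### The `q`-Chu–Vandermonde identity -/

theorem qbinom_add (α γ : ℕ) (β : ℤ) :
    qbinom X (α + γ) β = ∑ j ∈ range (α + 1),
      X ^ ((j : ℤ) * (γ - β + j)) * (qbinom X α j * qbinom X γ (β - j)) := by
  induction α generalizing γ with
  | zero => simp [qbinom_zero_left]
  | succ α ih =>
    have hassoc : ((α + 1 : ℕ) : ℤ) + γ = α + (γ + 1 : ℕ) := by push_cast; ring
    rw [hassoc, ih (γ + 1)]
    simp only [Nat.cast_succ, qbinom_succ' α, qbinom_succ γ, mul_add, add_mul, sum_add_distrib]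
    congr 1
    · rw [sum_range_succ _ (α + 1), qbinom_of_lt X (N := (α : ℤ)) (by simp)]
      simp only [mul_zero, zero_mul, add_zero]
      refine sum_congr rfl fun j _ => ?_
      rw [show (j : ℤ) * (γ + 1 - β) + j * j = j * (γ - β) + j * j + j by ring,
        X_zpow_add _ (j : ℤ)]
      ring
    · rw [sum_range_succ' _ (α + 1), qbinom_of_neg X α (by simp)]
      simp only [mul_zero, zero_mul, add_zero]
      refine sum_congr rfl fun j _ => ?_
      rw [Nat.cast_succ, add_sub_cancel_right, ← sub_sub,
        show (j + 1 : ℤ) * (γ - β) + (j + 1) * (j + 1) =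
          j * (γ + 1 - β) + j * j + (γ + 1 - (β - j)) by ring,
        X_zpow_add _ ((γ : ℤ) + 1 - (β - j))]
      ring

theorem qbinom_add' (α γ : ℕ) (β : ℤ) :
    qbinom X (α + γ) β = ∑ j ∈ range (α + 1),
      X ^ ((α - j : ℤ) * (β - j)) * (qbinom X α j * qbinom X γ (β - j)) := by
  rw [← qbinom_symm, qbinom_add, ← sum_range_reflect]
  refine sum_congr rfl fun j hj => ?_
  have hj : j ≤ α := Nat.lt_succ_iff.mp (mem_range.mp hj)
  rw [show α + 1 - 1 - j = α - j by omega, ← qbinom_symm X α j, ← qbinom_symm X γ (β - j)]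
  push_cast [hj]
  ring_nf

/-! ### The alternating sign -/

/-- The sign `(-1)^k q^(k(k-1)/2)` of the alternating sum. -/
def altSign (k : ℤ) : RatFunc ℚ := (-1) ^ k * X ^ (k * (k - 1) / 2)

lemma altSign_zero : altSign 0 = 1 := by simp [altSign]

lemma altSign_succ (k : ℤ) : altSign (k + 1) = -(altSign k * X ^ k) := by
  have htri : (k + 1) * (k + 1 - 1) / 2 = k * (k - 1) / 2 + k := by
    rw [show (k + 1) * (k + 1 - 1) = k * (k - 1) + k * 2 by ring,
      Int.add_mul_ediv_right _ _ two_ne_zero]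
  rw [altSign, altSign, htri, X_zpow_add, zpow_add_one₀ (by norm_num)]
  ring

lemma altSign_neg (k : ℤ) : altSign (-k) = altSign k * X ^ k := by
  have htri : -k * (-k - 1) / 2 = k * (k - 1) / 2 + k := by
    rw [show -k * (-k - 1) = k * (k - 1) + k * 2 by ring, Int.add_mul_ediv_right _ _ two_ne_zero]
  rw [altSign, altSign, htri, X_zpow_add, zpow_neg, ← inv_zpow, inv_neg_one, mul_assoc]

lemma altSign_natCast_sub (j t : ℕ) :
    altSign (j - t) = altSign (-t) * (X ^ j.choose 2 * (-X ^ (-t : ℤ)) ^ j) := by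
  induction j with
  | zero => simp
  | succ j ih =>
    rw [Nat.cast_succ, add_sub_right_comm, altSign_succ, ih, Nat.choose_succ_succ' j 1,
      Nat.choose_one_right, sub_eq_add_neg, X_zpow_add, zpow_natCast]
    ring

lemma odd_altSign_mul_one_sub_X_zpow : (fun k : ℤ => altSign k * (1 - X ^ k)).Odd := by
  intro k
  have hX : (X : RatFunc ℚ) ^ k * X ^ (-k) = 1 := by rw [← X_zpow_add, add_neg_cancel, zpow_zero]
  simp only [altSign_neg]
  linear_combination (-altSign k) * hX

/-! ### Weights and their merging rules -/

/-- The factor `1/([p+k]! [p+c-k]!)` contributed by an entry `p` to the `k`-th term of the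
alternating sum; `c = 1` for the entries `m_i` and `c = 0` for the entries `n_j`. -/
def weight (c : ℕ) (k : ℤ) (p : ℕ) : RatFunc ℚ := invQfact (p + k) * invQfact (p + c - k)

lemma even_weight_zero (p : ℕ) : (fun k => weight 0 k p).Even := fun k => by
  simp [weight, mul_comm, ← sub_eq_add_neg]

lemma sum_range_mul_qbinom_mul_qbinom (x : RatFunc ℚ) (z : ℤ → RatFunc ℚ) {α p : ℕ} (γ : ℤ) {β : ℤ}
    (hp : α ≤ p ∨ β ≤ p) :
    ∑ j ∈ range (α + 1), z j * (qbinom x α j * qbinom x γ (β - j)) =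
      ∑ t ∈ range (p + 1), z (p - t) * (qbinom x α (p - t) * qbinom x γ (β - (p - t))) := by
  have hα (j : ℕ) (hj : α + 1 ≤ j) : z j * (qbinom x α j * qbinom x γ (β - j)) = 0 := by
    rw [qbinom_of_lt x (by omega), zero_mul, mul_zero]
  have hβ (hp : β ≤ p) (j : ℕ) (hj : p + 1 ≤ j) :
      z j * (qbinom x α j * qbinom x γ (β - j)) = 0 := by
    rw [qbinom_of_neg x γ (by omega), mul_zero, mul_zero]
  calc _ = ∑ j ∈ range (p + 1), z j * (qbinom x α j * qbinom x γ (β - j)) := by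
        rcases le_total α p with h | h
        · exact (eventually_constant_sum hα (by omega)).symm
        · refine eventually_constant_sum (fun j hj => ?_) (by omega)
          exact hp.elim (fun hαp => hα j (by omega)) (fun hβp => hβ hβp j hj)
    _ = _ := by
        rw [← sum_range_reflect]
        refine sum_congr rfl fun t ht => ?_
        have ht : t ≤ p := Nat.lt_succ_iff.mp (mem_range.mp ht)
        rw [add_tsub_cancel_right, Nat.cast_sub ht]

lemma weight_mul_weight_eq_qbinom (c p p' : ℕ) (k : ℤ) :
    weight c k p * weight c k p' = invQfact (p + p' + c) *
      (invQfact (p + c - k) * invQfact (p' + k) * qbinom X (p + p' + c) (p + k)) := by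
  have h := invQfact_mul_invQfact (p + k) (p' + c - k)
  rw [show (p + k + (p' + c - k) : ℤ) = p + p' + c by ring] at h
  rw [weight, weight]
  linear_combination invQfact (p + c - k) * invQfact (p' + k) * h

lemma invQfact_sub_mul_weight_eq_qbinom (c p p' t : ℕ) (k : ℤ) :
    invQfact (p - t) * invQfact (p' - t) * weight c k t =
      invQfact (p + c - k) * invQfact (p' + k) *
        (qbinom X (p + c - k) (p - t) * qbinom X (p' + k) (t + k)) := by
  have hα := invQfact_mul_invQfact (p - t) (t + c - k)
  have hγ := invQfact_mul_invQfact (t + k) (p' - t)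
  rw [show (p - t + (t + c - k) : ℤ) = p + c - k by ring] at hα
  rw [show (t + k + (p' - t) : ℤ) = p' + k by ring] at hγ
  rw [weight]
  linear_combination invQfact (t + k) * invQfact (p' - t) * hα
    + invQfact (p + c - k) * qbinom X (p + c - k) (p - t) * hγ

lemma mul_weight_mul_weight_of_qbinom_add {c : ℕ} (hc : c ≤ 1) (p p' : ℕ) (k : ℤ) (y : RatFunc ℚ)
    (z : ℤ → RatFunc ℚ)
    (h : ∀ α γ : ℕ, (α : ℤ) = p + c - k → (γ : ℤ) = p' + k →
      y * qbinom X (α + γ) (p + k) = ∑ j ∈ range (α + 1),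
        z (p - j) * (qbinom X α j * qbinom X γ (p + k - j))) :
    y * (weight c k p * weight c k p') = invQfact (p + p' + c) * ∑ t ∈ range (p + 1),
      z t * (invQfact (p - t) * invQfact (p' - t) * weight c k t) := by
  simp only [weight_mul_weight_eq_qbinom, invQfact_sub_mul_weight_eq_qbinom,
    mul_left_comm (z _) (invQfact _ * invQfact _), mul_left_comm y, ← mul_sum]
  congr 1
  rcases lt_or_ge (p + c - k : ℤ) 0 with hα | hα
  · simp only [invQfact_of_neg hα, zero_mul]
  rcases lt_or_ge (p' + k : ℤ) 0 with hγ | hγ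
  · simp only [invQfact_of_neg hγ, mul_zero, zero_mul]
  obtain ⟨α, hα⟩ := Int.eq_ofNat_of_zero_le hα
  obtain ⟨γ, hγ⟩ := Int.eq_ofNat_of_zero_le hγ
  -- As `c ≤ 1`, either `c ≤ k` or `k ≤ 0`.
  have hp : α ≤ p ∨ p + k ≤ p := by omega
  rw [show (p + p' + c : ℤ) = α + γ by omega, h α γ hα.symm hγ.symm, hα, hγ,
    sum_range_mul_qbinom_mul_qbinom X (fun j => z (p - j)) γ hp]
  congr 1
  refine sum_congr rfl fun t _ => ?_
  rw [sub_sub_cancel, show (p + k - (p - t) : ℤ) = t + k by ring]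

theorem weight_mul_weight {c : ℕ} (hc : c ≤ 1) (p p' : ℕ) (k : ℤ) :
    weight c k p * weight c k p' = invQfact (p + p' + c) * ∑ t ∈ range (p + 1),
      X ^ ((p - t : ℤ) * (p' - t)) * (invQfact (p - t) * invQfact (p' - t) * weight c k t) := by
  rw [← one_mul (weight c k p * _)]
  refine mul_weight_mul_weight_of_qbinom_add hc p p' k 1 (fun t => X ^ ((p - t) * (p' - t)))
    fun α γ _ hγ => ?_
  rw [one_mul, qbinom_add, hγ]
  refine sum_congr rfl fun j _ => ?_
  congr 2
  ring

theorem X_zpow_mul_weight_mul_weight {c : ℕ} (hc : c ≤ 1) (p p' : ℕ) (k : ℤ) :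
    X ^ (k * (k - c)) * (weight c k p * weight c k p') =
      invQfact (p + p' + c) * ∑ t ∈ range (p + 1),
        X ^ ((t : ℤ) * (t + c)) * (invQfact (p - t) * invQfact (p' - t) * weight c k t) := by
  refine mul_weight_mul_weight_of_qbinom_add hc p p' k _ (fun t => X ^ (t * (t + c)))
    fun α γ hα _ => ?_
  rw [qbinom_add', hα, mul_sum]
  refine sum_congr rfl fun j _ => ?_
  rw [← mul_assoc, ← X_zpow_add]
  congr 2
  ring

lemma qfact_mul_sum_altSign_mul_weight_zero (t : ℕ) :
    qfact X (2 * t) * ∑ k ∈ Icc (-(t : ℤ)) t, altSign k * weight 0 k t =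
      altSign (-t) * ∏ i ∈ range (2 * t), (1 + -X ^ (-t : ℤ) * X ^ i) := by
  rw [← sum_qbinom_mul_pow, mul_sum, mul_sum]
  refine sum_bij' (fun k _ => (k + t).toNat) (fun j _ => (j : ℤ) - t) ?_ ?_ ?_ ?_ ?_
  · intro k hk; simp only [mem_Icc, mem_range] at *; omega
  · intro j hj; simp only [mem_Icc, mem_range] at *; omega
  · intro k hk; simp only [mem_Icc] at *; omega
  · intro j _; simp
  · intro k hk
    obtain ⟨j, hj⟩ := Int.eq_ofNat_of_zero_le (show 0 ≤ k + t by grind)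
    obtain rfl : k = j - t := by omega
    rw [sub_add_cancel, Int.toNat_natCast, qbinom_natCast, altSign_natCast_sub, weight]
    push_cast
    ring_nf

lemma weight_zero_eq_zero {t : ℕ} {k : ℤ} (hk : k ∉ Icc (-(t : ℤ)) t) : weight 0 k t = 0 := by
  rcases not_and_or.mp (mem_Icc.not.mp hk) with hk | hk
  · rw [weight, invQfact_of_neg (show (t : ℤ) + k < 0 by omega), zero_mul]
  · rw [weight, invQfact_of_neg (show (t : ℤ) + (0 : ℕ) - k < 0 by omega), mul_zero]

theorem sum_altSign_mul_weight_zero {t K : ℕ} (hK : t ≤ K) :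
    ∑ k ∈ Icc (-(K : ℤ)) K, altSign k * weight 0 k t = if t = 0 then 1 else 0 := by
  have hsupp : ∑ k ∈ Icc (-(t : ℤ)) t, altSign k * weight 0 k t =
      ∑ k ∈ Icc (-(K : ℤ)) K, altSign k * weight 0 k t :=
    sum_subset (Icc_subset_Icc (by omega) (by omega)) fun k _ hk => by
      rw [weight_zero_eq_zero hk, mul_zero]
  rw [← hsupp]
  split_ifs with ht
  · simp [ht, weight, altSign_zero, invQfact_zero]
  have hprod : ∏ i ∈ range (2 * t), (1 + -X ^ (-t : ℤ) * X ^ i : RatFunc ℚ) = 0 := by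
    refine prod_eq_zero (i := t) (mem_range.mpr (by omega)) ?_
    rw [← zpow_natCast, neg_mul, ← X_zpow_add, neg_add_cancel, zpow_zero, add_neg_cancel]
  have hsum := qfact_mul_sum_altSign_mul_weight_zero t
  rw [hprod, mul_zero] at hsum
  exact (mul_eq_zero.mp hsum).resolve_left (qfact_X_ne_zero _)

lemma one_sub_X_mul_weight_one (m : ℕ) (k : ℤ) :
    (1 - X) * weight 1 k m = (1 - X ^ (m + 1 + k : ℤ)) * weight 0 k (m + 1) := by
  have h := one_sub_X_mul_invQfact (m + k)
  rw [show (m + k + 1 : ℤ) = m + 1 + k by ring] at h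
  simp only [weight, Nat.cast_add, Nat.cast_one, Nat.cast_zero, add_zero]
  linear_combination invQfact (m + 1 - k) * h

theorem qfact_mul_sum_weight_one {f : ℤ → RatFunc ℚ} (hf : f.Even) (K m : ℕ) :
    qfact X m * ∑ k ∈ Icc (-(K : ℤ)) K, altSign k * f k * weight 1 k m =
      qfact X (m + 1) * ∑ k ∈ Icc (-(K : ℤ)) K, altSign k * f k * weight 0 k (m + 1) := by
  have hodd : ∑ k ∈ Icc (-(K : ℤ)) K,
      altSign k * (1 - X ^ k) * (f k * weight 0 k (m + 1)) = 0 := by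
    refine Function.Odd.finsetSum_eq_zero
      (odd_altSign_mul_one_sub_X_zpow.mul_even (hf.mul_even (even_weight_zero (m + 1)))) ?_
    ext k
    simp [neg_le, and_comm]
  have hfact := one_sub_X_mul_qfact_succ m
  -- `1 - q^(m+1+k) = (1 - q^(m+1)) + q^(m+1) (1 - q^k)`, and the last term has an odd contribution.
  have hsplit : (1 - X) * ∑ k ∈ Icc (-(K : ℤ)) K, altSign k * f k * weight 1 k m =
      (1 - X ^ (m + 1)) * (∑ k ∈ Icc (-(K : ℤ)) K, altSign k * f k * weight 0 k (m + 1)) +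
      X ^ (m + 1) * ∑ k ∈ Icc (-(K : ℤ)) K,
        altSign k * (1 - X ^ k) * (f k * weight 0 k (m + 1)) := by
    simp only [mul_sum, ← sum_add_distrib]
    refine sum_congr rfl fun k _ => ?_
    have hX : (X : RatFunc ℚ) ^ (m + 1 + k : ℤ) = X ^ (m + 1) * X ^ k := by
      rw [X_zpow_add, ← Nat.cast_succ, zpow_natCast]
    linear_combination altSign k * f k * (one_sub_X_mul_weight_one m k)
      - altSign k * f k * weight 0 k (m + 1) * hX
  refine mul_left_cancel₀ one_sub_X_ne_zero ?_
  rw [hodd] at hsplit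
  linear_combination qfact X m * hsplit
    - (∑ k ∈ Icc (-(K : ℤ)) K, altSign k * f k * weight 0 k (m + 1)) * hfact

/-! ### Merging the entries of a list -/

/-- The sum `∑ φ(k) q^(b k(k-c)) ∏ 1/([p+k]! [p+c-k]!)` over `k ∈ I`, with `p` ranging over the
entries of `l`: the alternating sum as a function of one of its two vectors, the other vector being
absorbed into `φ`. -/
def weightedSum (c : ℕ) (I : Finset ℤ) (φ : ℤ → RatFunc ℚ) (b : ℕ) (l : List ℕ) : RatFunc ℚ :=
  ∑ k ∈ I, φ k * X ^ ((b : ℤ) * (k * (k - c))) * (l.map (weight c k)).prod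

section WeightedSum

variable {c : ℕ} (I : Finset ℤ) (φ : ℤ → RatFunc ℚ) (b : ℕ)

lemma weightedSum_const_mul (y : RatFunc ℚ) (l : List ℕ) :
    weightedSum c I (fun k => y * φ k) b l = y * weightedSum c I φ b l := by
  simp only [weightedSum, mul_sum, mul_assoc]

lemma weightedSum_succ (l : List ℕ) :
    weightedSum c I φ (b + 1) l = weightedSum c I (fun k => X ^ (k * (k - c)) * φ k) b l := by
  refine sum_congr rfl fun k _ => ?_
  rw [Nat.cast_succ, add_one_mul, X_zpow_add]
  ring

lemma weightedSum_mul_cons_cons {p p' N : ℕ} {y : ℤ → RatFunc ℚ} {z : ℕ → RatFunc ℚ}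
    {w : RatFunc ℚ}
    (h : ∀ k, y k * (weight c k p * weight c k p') = w * ∑ t ∈ range N, z t * weight c k t)
    (l : List ℕ) :
    weightedSum c I (fun k => y k * φ k) b (p :: p' :: l) =
      w * ∑ t ∈ range N, z t * weightedSum c I φ b (t :: l) := by
  simp only [weightedSum, mul_sum]
  rw [sum_comm]
  refine sum_congr rfl fun k _ => ?_
  calc _ = y k * (weight c k p * weight c k p') *
        (φ k * X ^ ((b : ℤ) * (k * (k - c))) * (l.map (weight c k)).prod) := by
        simp only [List.map_cons, List.prod_cons]
        ring
    _ = _ := by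
        rw [h k, mul_sum, sum_mul]
        refine sum_congr rfl fun t _ => ?_
        rw [List.map_cons, List.prod_cons]
        ring

theorem weightedSum_cons_cons (hc : c ≤ 1) (p p' : ℕ) (l : List ℕ) :
    weightedSum c I φ b (p :: p' :: l) = invQfact (p + p' + c) * ∑ t ∈ range (p + 1),
      X ^ ((p - t : ℤ) * (p' - t)) * (invQfact (p - t) * invQfact (p' - t)) *
        weightedSum c I φ b (t :: l) := by
  have h (k : ℤ) : (1 : ℤ → RatFunc ℚ) k * (weight c k p * weight c k p') =
      invQfact (p + p' + c) * ∑ t ∈ range (p + 1),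
        X ^ ((p - t : ℤ) * (p' - t)) * (invQfact (p - t) * invQfact (p' - t)) * weight c k t := by
    simp only [Pi.one_apply, one_mul, weight_mul_weight hc, mul_assoc]
  simpa only [Pi.one_apply, one_mul] using weightedSum_mul_cons_cons I φ b h l

theorem weightedSum_succ_cons_cons (hc : c ≤ 1) (p p' : ℕ) (l : List ℕ) :
    weightedSum c I φ (b + 1) (p :: p' :: l) = invQfact (p + p' + c) * ∑ t ∈ range (p + 1),
      X ^ ((t : ℤ) * (t + c)) * (invQfact (p - t) * invQfact (p' - t)) *
        weightedSum c I φ b (t :: l) := by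
  rw [weightedSum_succ]
  exact weightedSum_mul_cons_cons I φ b
    (fun k => by simpa only [mul_assoc] using X_zpow_mul_weight_mul_weight hc p p' k) l

end WeightedSum

/-- The product of the factorials `[pᵢ + pᵢ₊₁ + c]!` over consecutive entries of a list, closed off
with `[p + e]!` for the last entry `p`. -/
def chainQfact (c e : ℕ) : List ℕ → RatFunc ℚ
  | [] => 1
  | p :: l => qfact X (p + (l.map (· + c)).headD e) * chainQfact c e l

lemma chainQfact_append_singleton (c e q : ℕ) (l : List ℕ) :
    chainQfact c e (l ++ [q]) = chainQfact c (q + c) l * qfact X (q + e) := by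
  induction l with
  | nil => simp [chainQfact]
  | cons p l ih => cases l <;> simp_all [chainQfact, mul_assoc]

lemma IsNonnegPoly.qfact_mul_sum {p p' h : ℕ} {E : ℕ → ℤ} {f : ℕ → RatFunc ℚ}
    (hE : ∀ t ≤ p, t ≤ p' → 0 ≤ E t)
    (hf : ∀ t ≤ p, IsNonnegPoly (qfact X t * qfact X (t + h) * f t)) :
    IsNonnegPoly (qfact X p * qfact X (p' + h) * ∑ t ∈ range (p + 1),
      X ^ E t * (invQfact (p - t) * invQfact (p' - t)) * f t) := by
  rw [mul_sum]
  refine sum fun t ht => ?_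
  have htp : t ≤ p := Nat.lt_succ_iff.mp (mem_range.mp ht)
  rcases lt_or_ge p' t with htp' | htp'
  · rw [invQfact_of_neg (show (p' : ℤ) - t < 0 by omega)]
    simpa using zero
  have hp := qfact_mul_invQfact_sub p t
  have hp' := qfact_mul_invQfact_sub (p' + h) (t + h)
  rw [show ((p' + h : ℕ) : ℤ) - (t + h : ℕ) = p' - t by push_cast; ring] at hp'
  have hterm : qfact X p * qfact X (p' + h) *
      (X ^ E t * (invQfact (p - t) * invQfact (p' - t)) * f t) =
      X ^ E t * (qbinom X p t * qbinom X (p' + h : ℕ) (t + h : ℕ)) *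
        (qfact X t * qfact X (t + h) * f t) := by
    linear_combination X ^ E t * f t * (qfact X (p' + h) * invQfact (p' - t) * hp
      + qbinom X p t * qfact X t * hp')
  rw [hterm]
  exact ((X_zpow (hE t htp htp')).mul ((isNonnegPoly_qbinom _ _).mul (isNonnegPoly_qbinom _ _))).mul
    (hf t htp)

theorem isNonnegPoly_weightedSum {c : ℕ} (hc : c ≤ 1) {I : Finset ℤ} {φ : ℤ → RatFunc ℚ} {e : ℕ}
    {l : List ℕ} {p b : ℕ} (hb : b ≤ l.length)
    (base : ∀ t ≤ p, IsNonnegPoly (qfact X t * qfact X (t + e) * weightedSum c I φ 0 [t])) :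
    IsNonnegPoly (qfact X p * chainQfact c e (p :: l) * weightedSum c I φ b (p :: l)) := by
  induction l generalizing p b with
  | nil =>
    obtain rfl : b = 0 := by simpa using hb
    simpa [chainQfact] using base p le_rfl
  | cons p' l ih =>
    set h := (l.map (· + c)).headD e
    have merge {E : ℕ → ℤ} {b' : ℕ} (hE : ∀ t ≤ p, t ≤ p' → 0 ≤ E t) (hb' : b' ≤ l.length)
        (hmerge : weightedSum c I φ b (p :: p' :: l) =
          invQfact (p + p' + c) * ∑ t ∈ range (p + 1),
            X ^ E t * (invQfact (p - t) * invQfact (p' - t)) * weightedSum c I φ b' (t :: l)) :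
        IsNonnegPoly (qfact X p * chainQfact c e (p :: p' :: l) *
          weightedSum c I φ b (p :: p' :: l)) := by
      have hcancel := qfact_mul_invQfact (p + p' + c)
      push_cast at hcancel
      have hnonneg := IsNonnegPoly.qfact_mul_sum (h := h) hE
        (f := fun t => chainQfact c e l * weightedSum c I φ b' (t :: l)) fun t ht => by
          simpa only [chainQfact, mul_assoc] using ih hb' fun t' ht' => base t' (ht'.trans ht)
      simp only [mul_left_comm _ (chainQfact c e l), ← mul_sum] at hnonneg
      convert hnonneg using 1
      rw [hmerge]
      simp only [chainQfact, List.map_cons, List.headD_cons, ← add_assoc]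
      linear_combination chainQfact c e l * (qfact X p * qfact X (p' + h) * ∑ t ∈ range (p + 1),
        X ^ E t * (invQfact (p - t) * invQfact (p' - t)) * weightedSum c I φ b' (t :: l)) * hcancel
    cases b with
    | zero =>
      exact merge (fun t ht ht' => mul_nonneg (by omega) (by omega)) (Nat.zero_le _)
        (weightedSum_cons_cons I φ 0 hc p p' l)
    | succ b =>
      exact merge (fun t _ _ => by positivity) (Nat.le_of_succ_le_succ hb)
        (weightedSum_succ_cons_cons I φ b hc p p' l)

/-! ### Positivity of the alternating sum -/

theorem isNonnegPoly_weightedSum_altSign {p K : ℕ} (hp : p ≤ K) {a : ℕ} {l : List ℕ}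
    (ha : a ≤ l.length) :
    IsNonnegPoly (qfact X p * chainQfact 0 0 (p :: l) *
      weightedSum 0 (Icc (-(K : ℤ)) K) altSign a (p :: l)) := by
  refine isNonnegPoly_weightedSum zero_le_one ha fun t ht => ?_
  have hsum : weightedSum 0 (Icc (-(K : ℤ)) K) altSign 0 [t] = if t = 0 then 1 else 0 := by
    simpa [weightedSum] using sum_altSign_mul_weight_zero (ht.trans hp)
  rw [hsum]
  split_ifs with ht0
  · simpa [ht0, qfact_zero] using IsNonnegPoly.one
  · simpa using IsNonnegPoly.zero

/-- The factor of the `k`-th term of the alternating sum that depends on `a` and on the vector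
`(n_1, …, n_s)`, given as the list `l`. -/
def evenFactor (a : ℕ) (l : List ℕ) (k : ℤ) : RatFunc ℚ :=
  X ^ ((a : ℤ) * k ^ 2) * (l.map (weight 0 k)).prod

lemma even_evenFactor (a : ℕ) (l : List ℕ) : (evenFactor a l).Even := fun k => by
  have h : weight 0 (-k) = weight 0 k := funext fun p => even_weight_zero p k
  rw [evenFactor, evenFactor, neg_sq, h]

theorem qfact_mul_weightedSum_singleton (a m K : ℕ) (l : List ℕ) :
    qfact X m * weightedSum 1 (Icc (-(K : ℤ)) K) (fun k => altSign k * evenFactor a l k) 0 [m] =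
      qfact X (m + 1) * weightedSum 0 (Icc (-(K : ℤ)) K) altSign a (l ++ [m + 1]) := by
  calc _ = qfact X m * ∑ k ∈ Icc (-(K : ℤ)) K, altSign k * evenFactor a l k * weight 1 k m := by
        simp [weightedSum]
    _ = _ := qfact_mul_sum_weight_one (even_evenFactor a l) K m
    _ = _ := by simp [weightedSum, evenFactor, mul_assoc, sq]

theorem isNonnegPoly_weightedSum_singleton {p K : ℕ} (hp : p ≤ K) (m : ℕ) {a : ℕ} {l : List ℕ}
    (ha : a ≤ l.length + 1) :
    IsNonnegPoly (qfact X p * chainQfact 0 (m + 1) (p :: l) * (qfact X m *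
      weightedSum 1 (Icc (-(K : ℤ)) K) (fun k => altSign k * evenFactor a (p :: l) k) 0 [m])) := by
  have h := isNonnegPoly_weightedSum_altSign hp (l := l ++ [m + 1]) (by simpa using ha)
  rw [← List.cons_append, chainQfact_append_singleton] at h
  convert h using 1
  rw [qfact_mul_weightedSum_singleton, List.cons_append]
  ring

/-! ### The cyclic products -/

lemma prod_range_succ_mod {M : Type*} [CommMonoid M] (f : ℕ → M) (r : ℕ) :
    ∏ i ∈ range (r + 1), f ((i + 1) % (r + 1)) = ∏ i ∈ range (r + 1), f i := by
  rw [prod_range_succ, prod_range_succ', Nat.mod_self]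
  congr 1
  refine prod_congr rfl fun i hi => ?_
  rw [Nat.mod_eq_of_lt (by simpa using hi)]

lemma prod_qbinom_cyclic (c r : ℕ) (m : ℕ → ℕ) (k : ℤ) :
    ∏ i ∈ range (r + 1),
        qbinom X ((m i : ℤ) + (m ((i + 1) % (r + 1)) : ℤ) + c) ((m i : ℤ) + k) =
      (∏ i ∈ range r, qfact X (m i + m (i + 1) + c)) * qfact X (m 0 + m r + c) *
        ((List.ofFn fun i : Fin (r + 1) => m i).map (weight c k)).prod := by
  have hfactor (i : ℕ) :
      qbinom X ((m i : ℤ) + (m ((i + 1) % (r + 1)) : ℤ) + c) ((m i : ℤ) + k) =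
        qfact X (m i + m ((i + 1) % (r + 1)) + c) *
          (invQfact (m i + k) * invQfact (m ((i + 1) % (r + 1)) + c - k)) := by
    have h := qbinom_natCast (m i + m ((i + 1) % (r + 1)) + c) (m i + k)
    push_cast at h
    rw [h]
    ring_nf
  have hqfact : ∏ i ∈ range (r + 1), qfact X (m i + m ((i + 1) % (r + 1)) + c) =
      (∏ i ∈ range r, qfact X (m i + m (i + 1) + c)) * qfact X (m 0 + m r + c) := by
    rw [prod_range_succ, Nat.mod_self, add_comm (m r)]
    congr 1
    refine prod_congr rfl fun i hi => ?_
    rw [Nat.mod_eq_of_lt (by simpa using hi)]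
  simp only [hfactor, prod_mul_distrib, hqfact, prod_range_succ_mod fun i => invQfact (m i + c - k),
    List.map_ofFn, List.prod_ofFn, Function.comp_apply, weight, Finset.prod_range]

lemma chainQfact_ofFn (c e : ℕ) (m : ℕ → ℕ) (r : ℕ) :
    chainQfact c e (List.ofFn fun i : Fin (r + 1) => m i) =
      (∏ i ∈ range r, qfact X (m i + m (i + 1) + c)) * qfact X (m r + e) := by
  induction r generalizing m with
  | zero => simp [chainQfact]
  | succ r ih =>
    rw [List.ofFn_succ, chainQfact, prod_range_succ', mul_right_comm]
    have hhead : ((List.ofFn fun i : Fin (r + 1) => m (i + 1)).map (· + c)).headD e = m 1 + c := by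
      rw [List.ofFn_succ, List.map_cons, List.headD_cons, Fin.val_zero, zero_add]
    simp only [Fin.val_succ, Fin.val_zero, ih fun i => m (i + 1), hhead]
    ring_nf

lemma zpow_eq_altSign (a b : ℕ) (k : ℤ) :
    (-1 : RatFunc ℚ) ^ k *
        X ^ ((a : ℤ) * k ^ 2 + (2 * ((b + 1 : ℕ) : ℤ) - 1) * (k * (k - 1) / 2)) =
      altSign k * X ^ ((a : ℤ) * k ^ 2) * X ^ ((b : ℤ) * (k * (k - 1))) := by
  have htri : 2 * (k * (k - 1) / 2) = k * (k - 1) :=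
    Int.two_mul_ediv_two_of_even (Int.even_mul_pred_self k)
  rw [altSign, mul_assoc, mul_assoc, ← X_zpow_add, ← X_zpow_add]
  congr 2
  push_cast
  linear_combination (b : ℤ) * htri

theorem F_eq_weightedSum (r s a b : ℕ) (m n : ℕ → ℕ) :
    F (r + 1) (s + 1) a (b + 1) m n X =
      qfact X (m 0) * chainQfact 1 (n s + 1) (List.ofFn fun i : Fin (r + 1) => m i) *
        (qfact X (n 0) * (∏ j ∈ range s, qfact X (n j + n (j + 1))) *
          weightedSum 1 (Icc (-(n 0 : ℤ)) (n 0))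
            (fun k => altSign k * evenFactor a (List.ofFn fun j : Fin (s + 1) => n j) k) b
            (List.ofFn fun i : Fin (r + 1) => m i)) := by
  have hm := fun k => prod_qbinom_cyclic 1 r m k
  have hn := fun k => prod_qbinom_cyclic 0 s n k
  have hm0 := qfact_X_ne_zero (m 0 + m r + 1)
  have hn0 := qfact_X_ne_zero (n 0 + n s)
  simp only [Nat.cast_one, Nat.cast_zero, add_zero] at hm hn
  simp only [F, weightedSum, evenFactor, chainQfact_ofFn, zpow_eq_altSign, hm, hn, mul_sum,
    add_tsub_cancel_right, Nat.cast_one]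
  refine sum_congr rfl fun k _ => ?_
  rw [← add_assoc (m r)]
  field_simp

/-- For `r, s > 1`, nonnegative integers `m_1, …, m_r` and positive integers
`n_1, …, n_s` (with cyclic conventions), `0 ≤ a ≤ s` and `1 ≤ b ≤ r`,
the alternating sum `F_{r,s}^{(b)}(m; n; a; q)` is a polynomial in `q`
with nonnegative integer coefficients. -/
theorem F_isNonnegPoly_of_nonneg (r s : ℕ) (hr : 1 < r) (hs : 1 < s) (m n : ℕ → ℕ)
    (hn : ∀ j < s, 0 < n j)
    (a b : ℕ) (ha : a ≤ s) (hb1 : 1 ≤ b) (hbr : b ≤ r) :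
    IsNonnegPoly (F r s a b m n RatFunc.X) := by
  obtain ⟨b, rfl⟩ := Nat.exists_eq_add_of_le' hb1
  obtain ⟨r, rfl⟩ := Nat.exists_eq_add_of_le' (hb1.trans hbr)
  obtain ⟨s, rfl⟩ := Nat.exists_eq_add_of_le' hs.le
  rw [F_eq_weightedSum, ← weightedSum_const_mul, List.ofFn_succ]
  refine isNonnegPoly_weightedSum le_rfl (by simpa using hbr) fun t _ => ?_
  have hcons : n 0 :: List.ofFn (fun j : Fin s => n j.succ) =
      List.ofFn fun j : Fin (s + 1) => n j := by rw [List.ofFn_succ, Fin.val_zero]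
  have hnonneg := isNonnegPoly_weightedSum_singleton (le_refl (n 0)) t
    (l := List.ofFn fun j : Fin s => n j.succ) (a := a) (by simpa using ha)
  rw [hcons, chainQfact_ofFn, show n s + (t + 1) = t + (n s + 1) by ring] at hnonneg
  rw [weightedSum_const_mul]
  convert hnonneg using 1
  simp only [add_zero]
  ring

end
end

section
/- Let r, s > 1, let m_1, ..., m_r be nonnegative integers and n_1, ..., n_s positive integers with cyclic conventions m_{r+1} = m_1 and n_{s+1} = n_1, and let 0 ≤ a ≤ s and 1 ≤ b ≤ r. Then the following reciprocity holds as an identity of rational functions: F_{r,s}^{(b)}(m; n; a; q^{-1}) = q^{-Δ(m;n)} · F_{r,s}^{(r-b+1)}(m; n; s-a; q), where Δ(m;n) = C(m_1,2) + C(n_1,2) + C(m_r+n_s+1,2) - C(m_1+m_r+1,2) - C(n_1+n_s,2) + Σ_{i=1}^{r} m_i(m_{i+1}+1) + Σ_{j=1}^{s} n_j n_{j+1}, with C(N,2) = N(N-1)/2. -/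
open Finset

noncomputable section

/-- The exponent `Δ(m;n)` from the reciprocity lemma:
`Δ = C(m_1,2) + C(n_1,2) + C(m_r+n_s+1,2) - C(m_1+m_r+1,2) - C(n_1+n_s,2)
   + Σ_{i=1}^{r} m_i(m_{i+1}+1) + Σ_{j=1}^{s} n_j n_{j+1}`. -/
def delta (r s : ℕ) (m n : ℕ → ℕ) : ℤ :=
  ((m 0).choose 2 : ℤ) + ((n 0).choose 2 : ℤ) +
      ((m (r - 1) + n (s - 1) + 1).choose 2 : ℤ) -
    ((m 0 + m (r - 1) + 1).choose 2 : ℤ) - ((n 0 + n (s - 1)).choose 2 : ℤ) +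
    ∑ i ∈ Finset.range r, (m i : ℤ) * ((m ((i + 1) % r) : ℤ) + 1) +
    ∑ j ∈ Finset.range s, (n j : ℤ) * (n ((j + 1) % s) : ℤ)

/-!
Under `q ↦ q⁻¹` every `q`-integer, `q`-factorial and Gaussian coefficient is multiplied by a power
of `q`; for `[N choose K]` the exponent is `-K (N - K)`. In the `k`-th summand these exponents are
`-(m_i + k) (m_{i+1} + 1 - k)` and `-(n_j + k) (n_{j+1} - k)`. Their terms linear in the `m_i` and
`n_j` cancel around the two cycles, which leaves a constant, absorbed in `Δ`, plus
`r k (k - 1) + s k ^ 2`. The latter turns the quadratic exponent with parameters `(a, b)`, negated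
by the inversion, into the one with parameters `(s - a, r - b + 1)`, so the identity holds summand
by summand.
-/

theorem zpow_sum₀ {ι G : Type*} [CommGroupWithZero G] {x : G} (hx : x ≠ 0) (s : Finset ι)
    (f : ι → ℤ) : x ^ (∑ i ∈ s, f i) = ∏ i ∈ s, x ^ f i := by
  classical
  induction s using Finset.induction_on with
  | empty => simp
  | insert i s hi ih => rw [sum_insert hi, prod_insert hi, zpow_add₀ hx, ih]

theorem add_choose_two (k l : ℕ) : (k + l).choose 2 = k.choose 2 + l.choose 2 + k * l := by
  induction l with
  | zero => simp
  | succ l ih =>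
    rw [← add_assoc, Nat.choose_succ_succ' (k + l) 1, Nat.choose_succ_succ' l 1, ih]
    simp only [Nat.choose_one_right]
    ring

theorem sum_range_succ_mod {M : Type*} [AddCommMonoid M] (r : ℕ) (f : ℕ → M) :
    ∑ i ∈ range r, f ((i + 1) % r) = ∑ i ∈ range r, f i := by
  cases r with
  | zero => simp
  | succ r =>
    rw [sum_range_succ, sum_range_succ', Nat.mod_self]
    congr 1
    exact sum_congr rfl fun i hi => by
      rw [Nat.mod_eq_of_lt (Nat.succ_lt_succ (mem_range.mp hi))]

theorem sum_cyclic_add_mul_sub {R : Type*} [CommRing R] (r : ℕ) (m : ℕ → R) (c k : R) :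
    ∑ i ∈ range r, (m i + k) * (m ((i + 1) % r) + c - k) =
      ∑ i ∈ range r, m i * (m ((i + 1) % r) + c) - r * (k * (k - c)) := by
  have hterm (i : ℕ) : (m i + k) * (m ((i + 1) % r) + c - k) =
      m i * (m ((i + 1) % r) + c) + k * m ((i + 1) % r) - k * m i - k * (k - c) := by
    ring
  simp_rw [hterm, sum_sub_distrib, sum_add_distrib, ← mul_sum, sum_range_succ_mod r m, sum_const,
    card_range, nsmul_eq_mul]
  ring

section Inversion

variable {x : RatFunc ℚ}

theorem qint_inv (hx : x ≠ 0) (n : ℕ) : qint x⁻¹ n = x ^ (1 - n : ℤ) * qint x n := by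
  obtain rfl | hx1 := eq_or_ne x 1
  · simp
  have hsub : 1 - x ≠ 0 := sub_ne_zero.mpr hx1.symm
  rw [qint, qint, inv_pow, zpow_sub₀ hx, zpow_one, zpow_natCast]
  field_simp
  ring

theorem qfact_succ (x : RatFunc ℚ) (n : ℕ) : qfact x (n + 1) = qfact x n * qint x (n + 1) :=
  prod_range_succ _ _

theorem qfact_inv (hx : x ≠ 0) (n : ℕ) :
    qfact x⁻¹ n = x ^ (-(n.choose 2 : ℤ)) * qfact x n := by
  induction n with
  | zero => simp [qfact]
  | succ n ih =>
    have hexp : (-((n + 1).choose 2 : ℤ)) = -(n.choose 2 : ℤ) + (1 - (n + 1 : ℕ)) := by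
      rw [Nat.choose_succ_succ' n 1, Nat.choose_one_right]
      push_cast
      ring
    rw [qfact_succ, qfact_succ, ih, qint_inv hx, hexp, zpow_add₀ hx, mul_mul_mul_comm]

theorem qbinom_inv (hx : x ≠ 0) (N K : ℤ) :
    qbinom x⁻¹ N K = x ^ (-(K * (N - K))) * qbinom x N K := by
  unfold qbinom
  split_ifs with h
  · obtain ⟨k, rfl⟩ := Int.eq_ofNat_of_zero_le h.1
    obtain ⟨l, hl⟩ := Int.eq_ofNat_of_zero_le (sub_nonneg.mpr h.2)
    obtain rfl : N = (k + l : ℕ) := by push_cast; linarith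
    have hexp : -((k + l).choose 2 : ℤ) - (-(k.choose 2 : ℤ) + -(l.choose 2 : ℤ)) = -(k * l) := by
      rw [add_choose_two]
      push_cast
      ring
    simp only [hl, Int.toNat_natCast, qfact_inv hx]
    rw [mul_mul_mul_comm, mul_div_mul_comm, ← zpow_add₀ hx, ← zpow_sub₀ hx, hexp]
  · simp

/-- The product `∏ [m_i + m_{i+1} + c choose m_i + k]` over a cyclic vector `(m_1, …, m_r)`,
encoded as in `F`. The two products in a summand of `F` are the cases `c = 1` and `c = 0`. -/
def qbinomCycle (r : ℕ) (m : ℕ → ℤ) (c k : ℤ) (x : RatFunc ℚ) : RatFunc ℚ :=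
  ∏ i ∈ range r, qbinom x (m i + m ((i + 1) % r) + c) (m i + k)

theorem qbinomCycle_inv (hx : x ≠ 0) (r : ℕ) (m : ℕ → ℤ) (c k : ℤ) :
    qbinomCycle r m c k x⁻¹ =
      x ^ (r * (k * (k - c)) - ∑ i ∈ range r, m i * (m ((i + 1) % r) + c)) *
        qbinomCycle r m c k x := by
  have hexp (i : ℕ) : (m i + k) * (m i + m ((i + 1) % r) + c - (m i + k)) =
      (m i + k) * (m ((i + 1) % r) + c - k) := by
    ring
  simp_rw [qbinomCycle, qbinom_inv hx, prod_mul_distrib, ← zpow_sum₀ hx, hexp, sum_neg_distrib,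
    sum_cyclic_add_mul_sub, neg_sub]

/-- The quotient of `q`-factorials in front of the sum in `F`, in terms of the first and last
entries `m₁`, `m'` and `n₁`, `n'` of the two cyclic vectors. -/
def qfactQuotient (m₁ m' n₁ n' : ℕ) (x : RatFunc ℚ) : RatFunc ℚ :=
  qfact x m₁ * qfact x n₁ * qfact x (m' + n' + 1) / (qfact x (m₁ + m' + 1) * qfact x (n₁ + n'))

theorem qfactQuotient_inv (hx : x ≠ 0) (m₁ m' n₁ n' : ℕ) :
    qfactQuotient m₁ m' n₁ n' x⁻¹ =
      x ^ (-((m₁.choose 2 : ℤ) + n₁.choose 2 + (m' + n' + 1).choose 2 - (m₁ + m' + 1).choose 2 -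
        (n₁ + n').choose 2)) * qfactQuotient m₁ m' n₁ n' x := by
  simp only [qfactQuotient, qfact_inv hx]
  rw [mul_mul_mul_comm (x ^ (-(m₁.choose 2 : ℤ))), ← zpow_add₀ hx,
    mul_mul_mul_comm (x ^ (-(m₁.choose 2 : ℤ) + -(n₁.choose 2 : ℤ))), ← zpow_add₀ hx,
    mul_mul_mul_comm (x ^ (-((m₁ + m' + 1).choose 2 : ℤ))), ← zpow_add₀ hx,
    mul_div_mul_comm, ← zpow_sub₀ hx]
  congr 2
  ring

/-- The `k`-th summand of `F`, with integer parameters so that `s - a` and `r - b + 1` are not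
truncated. -/
def FTerm (r s : ℕ) (a b : ℤ) (m n : ℕ → ℤ) (x : RatFunc ℚ) (k : ℤ) : RatFunc ℚ :=
  (-1) ^ k * x ^ (a * k ^ 2 + (2 * b - 1) * (k * (k - 1) / 2)) *
    qbinomCycle r m 1 k x * qbinomCycle s n 0 k x

theorem F_eq_qfactQuotient_mul_sum (r s a b : ℕ) (m n : ℕ → ℕ) (x : RatFunc ℚ) :
    F r s a b m n x = qfactQuotient (m 0) (m (r - 1)) (n 0) (n (s - 1)) x *
      ∑ k ∈ Icc (-(n 0 : ℤ)) (n 0), FTerm r s a b (m ·) (n ·) x k := by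
  simp only [F, qfactQuotient, FTerm, qbinomCycle, add_zero]

theorem FTerm_inv (hx : x ≠ 0) (r s : ℕ) (a b : ℤ) (m n : ℕ → ℤ) (k : ℤ) :
    FTerm r s a b m n x⁻¹ k =
      x ^ (-(∑ i ∈ range r, m i * (m ((i + 1) % r) + 1) +
        ∑ j ∈ range s, n j * n ((j + 1) % s))) * FTerm r s (s - a) (r - b + 1) m n x k := by
  set M := ∑ i ∈ range r, m i * (m ((i + 1) % r) + 1)
  set N := ∑ j ∈ range s, n j * n ((j + 1) % s)
  have hhalf : 2 * (k * (k - 1) / 2) = k * (k - 1) :=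
    Int.mul_ediv_cancel' (Int.even_mul_pred_self k).two_dvd
  have hexp : -(a * k ^ 2 + (2 * b - 1) * (k * (k - 1) / 2)) + (r * (k * (k - 1)) - M) +
      (s * (k * k) - N) =
      -(M + N) + ((s - a) * k ^ 2 + (2 * (r - b + 1) - 1) * (k * (k - 1) / 2)) := by
    linear_combination -(r : ℤ) * hhalf
  have hpow := congrArg (x ^ ·) hexp
  simp only [zpow_add₀ hx] at hpow
  simp only [FTerm, qbinomCycle_inv hx, inv_zpow', zpow_add₀ hx, add_zero, sub_zero]
  linear_combination (-1) ^ k * qbinomCycle r m 1 k x * qbinomCycle s n 0 k x * hpow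

theorem F_reciprocity_general (hx : x ≠ 0) (r s : ℕ) (m n : ℕ → ℕ) {a b : ℕ} (ha : a ≤ s)
    (hb : b ≤ r) :
    F r s a b m n x⁻¹ = x ^ (-delta r s m n) * F r s (s - a) (r - b + 1) m n x := by
  rw [F_eq_qfactQuotient_mul_sum, F_eq_qfactQuotient_mul_sum, qfactQuotient_inv hx]
  simp only [FTerm_inv hx, ← mul_sum]
  rw [mul_mul_mul_comm, ← zpow_add₀ hx]
  push_cast [Nat.cast_sub ha, Nat.cast_sub hb]
  congr 2
  rw [delta]
  ring

end Inversion

/-- Reciprocity: for `r, s > 1`, nonnegative `m_i`, positive `n_j`,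
`0 ≤ a ≤ s` and `1 ≤ b ≤ r`, as an identity of rational functions,
`F_{r,s}^{(b)}(m; n; a; q⁻¹) = q^{-Δ(m;n)} F_{r,s}^{(r-b+1)}(m; n; s-a; q)`. -/
theorem F_reciprocity (r s : ℕ) (hr : 1 < r) (hs : 1 < s) (m n : ℕ → ℕ)
    (hn : ∀ j < s, 0 < n j) (a b : ℕ) (ha : a ≤ s) (hb1 : 1 ≤ b) (hbr : b ≤ r) :
    F r s a b m n (RatFunc.X)⁻¹ =
      (RatFunc.X : RatFunc ℚ) ^ (-(delta r s m n)) *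
        F r s (s - a) (r - b + 1) m n RatFunc.X :=
  F_reciprocity_general RatFunc.X_ne_zero r s m n ha hbr

end
end
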